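/- Let N be a positive even integer and h ∈ (1/N)ℤ. Then for all τ ∈ H, ϑ̃_{N,h}(τ + 1) = e(−h²/2) · ϑ̃_{N,h}(τ). -/

import Mathlib

open Complex MeasureTheory
open scoped Classical

noncomputable section

/-- `e(a) = exp(2πia)`. -/
def e (a : ℂ) : ℂ := Complex.exp (2 * (Real.pi : ℂ) * Complex.I * a)

/-- The Fourier transform `F(g)(x) = ∫ g(w) e(wx) dw`. -/
def fourierT (g : ℝ → ℂ) (x : ℝ) : ℂ := ∫ w : ℝ, g w * e ((w * x : ℝ))

/-- The operator `E_σ(f)(x) = e(x²σ/2) ∫_0^x e(-w²σ/2) f(w) dw`. -/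
def Eop (σ : ℂ) (f : ℝ → ℂ) (x : ℝ) : ℂ :=
  e ((x : ℂ)^2 * σ / 2) * ∫ w in (0:ℝ)..x, e (-(w : ℂ)^2 * σ / 2) * f w

/-- `ω_τ(x) = e(-x²τ/2) ∑_{m ∈ ℤ+1/2, m ≥ |x|} e(m²τ/2 + m/2)`. -/
def omega (τ : ℂ) (x : ℝ) : ℂ :=
  e (-(x : ℂ)^2 * τ / 2) *
    ∑' m : ℤ, if |x| ≤ (m : ℝ) + 1/2 then
      e (((m : ℂ) + 1/2)^2 / 2 * τ + ((m : ℂ) + 1/2) / 2) else 0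

/-- `η³(τ) = -i ∑_{m ∈ ℤ+1/2} m e(m²τ/2 + m/2)`. -/
def eta3 (τ : ℂ) : ℂ :=
  -Complex.I * ∑' m : ℤ, ((m : ℂ) + 1/2) * e (((m : ℂ) + 1/2)^2 / 2 * τ + ((m : ℂ) + 1/2) / 2)

/-- The complementary error function. -/
def erfc (x : ℝ) : ℝ := (2 / Real.sqrt Real.pi) * ∫ t in Set.Ioi x, Real.exp (-t^2)

/-- `g⁺_τ`. -/
def gplus (τ : ℂ) (x : ℝ) : ℂ :=
  e (-(x : ℂ)^2 * τ / 2) * ((Real.sign x : ℂ) / (Complex.I * eta3 τ)) *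
    ∑' m : ℤ, if |x| < (m : ℝ) + 1/2 then
      (((m : ℝ) + 1/2 - |x| : ℝ) : ℂ) * e (((m : ℂ) + 1/2)^2 / 2 * τ + ((m : ℂ) + 1/2) / 2)
    else 0

/-- `g*_τ`. -/
def gstar (τ : ℂ) (x : ℝ) : ℂ :=
  e (-(x : ℂ)^2 * τ / 2) * ((Real.sign x : ℂ) / 2) *
    (erfc (Real.sqrt (2 * Real.pi * τ.im) * |x|) : ℂ)

/-- `g_τ = g⁺_τ - g*_τ`. -/
def gfun (τ : ℂ) (x : ℝ) : ℂ := gplus τ x - gstar τ x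

/-- The operator `ξ_k f = 2i v^k conj(∂f/∂τ̄)`, with `∂/∂τ̄ = (1/2)(∂/∂u + i ∂/∂v)`. -/
def xi (k : ℝ) (f : ℂ → ℂ) (τ : ℂ) : ℂ :=
  2 * Complex.I * ((τ.im ^ k : ℝ) : ℂ) *
    (starRingEnd ℂ) ((1/2 : ℂ) * (fderiv ℝ f τ 1 + Complex.I * fderiv ℝ f τ Complex.I))

/-- Sum of divisors function `σ₁`. -/
def sigma1 (n : ℕ) : ℕ := ∑ d ∈ Nat.divisors n, d

/-- The weight 2 Eisenstein series `E₂`. -/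
def E2 (τ : ℂ) : ℂ := 1 - 24 * ∑' n : ℕ, (sigma1 (n+1) : ℂ) * e ((n + 1 : ℂ) * τ)

/-- `ϑ̃_{N,h}`. -/
def tvtheta (N : ℕ) (h : ℝ) (τ : ℂ) : ℂ :=
  (if ∃ m : ℤ, h = (m : ℝ) + 1/2 then
      e ((h : ℂ) / 2) * E2 τ / (12 * (N : ℂ) * Complex.I * eta3 τ) else 0)
  + ∑' n : ℤ, gfun τ ((N : ℝ) * n + h)

/-- The Schwartz function `φ_τ(x,y) = √(2v)·x·e(x²τ/2 - y²τ̄/2)`. -/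
def Phi (τ : ℂ) (x y : ℝ) : ℂ :=
  (Real.sqrt (2 * τ.im) : ℂ) * (x : ℂ) *
    e ((x : ℂ)^2 * τ / 2 - (y : ℂ)^2 * (starRingEnd ℂ) τ / 2)

/-- The signature (1,1) bilinear form `B((a₁,a₂),(b₁,b₂)) = a₁b₂ + a₂b₁`. -/
def Bform (a b : ℝ × ℝ) : ℝ := a.1 * b.2 + a.2 * b.1

/-- `Z⁺_t = (t/√2, t⁻¹/√2)`. -/
def Zp (t : ℝ) : ℝ × ℝ := (t / Real.sqrt 2, t⁻¹ / Real.sqrt 2)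

/-- `Z⁻_t = (t/√2, -t⁻¹/√2)`. -/
def Zm (t : ℝ) : ℝ × ℝ := (t / Real.sqrt 2, -t⁻¹ / Real.sqrt 2)

end

/-!
Under `τ ↦ τ + 1` every half-integral theta term `e(m²τ/2 + m/2)`, `m ∈ ℤ + 1/2`, picks up the same
factor `e(m²/2) = e(1/8)`. This factor cancels between the inner series of `g⁺_τ` and the `η³` in
its denominator, and `g*_τ` otherwise depends on `τ` only through `Im τ`, so
`g_{τ+1}(x) = e(-x²/2) g_τ(x)`. The multiplier `e(-x²/2)` is constant on the coset `Nℤ + h`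
because `N²/2 + N h` is an integer. The `E₂`-term occurs only for `h ∈ ℤ + 1/2`, where the factor
`e(1/8)⁻¹` coming from `1/η³` is `e(-h²/2)`.
-/

theorem e_add (a b : ℂ) : e (a + b) = e a * e b := by
  rw [e, mul_add, Complex.exp_add, e, e]

theorem e_neg (a : ℂ) : e (-a) = (e a)⁻¹ := by
  rw [e, mul_neg, Complex.exp_neg, e]

theorem e_ne_zero (a : ℂ) : e a ≠ 0 := Complex.exp_ne_zero _

theorem e_intCast (n : ℤ) : e n = 1 := by
  rw [e, mul_comm, Complex.exp_int_mul_two_pi_mul_I]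

theorem e_add_intCast (a : ℂ) (n : ℤ) : e (a + n) = e a := by
  rw [e_add, e_intCast, mul_one]

theorem e_half_integer_sq_div_two (m : ℤ) : e (((m : ℂ) + 1 / 2) ^ 2 / 2) = e (1 / 8) := by
  obtain ⟨c, hc⟩ := Int.even_mul_succ_self m
  have hc' : (m : ℂ) * (m + 1) = c + c := by exact_mod_cast hc
  rw [← e_add_intCast (1 / 8) c]
  congr 1
  linear_combination hc' / 2

theorem e_neg_sq_div_two_coset {N : ℤ} {h : ℂ} (hNh : ∃ k : ℤ, (N : ℂ) ^ 2 / 2 + N * h = k)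
    (n : ℤ) : e (-(N * n + h) ^ 2 / 2) = e (-h ^ 2 / 2) := by
  obtain ⟨k, hk⟩ := hNh
  obtain ⟨c, hc⟩ := Int.even_mul_pred_self n
  have hc' : (n : ℂ) * (n - 1) = c + c := by exact_mod_cast hc
  -- `(Nn + h)² / 2 - h² / 2 = N² n(n - 1) / 2 + n (N² / 2 + N h)`
  rw [← e_add_intCast (-h ^ 2 / 2) (-(N ^ 2 * c + n * k))]
  congr 1
  push_cast
  linear_combination -(n : ℂ) * hk - (N : ℂ) ^ 2 / 2 * hc'

theorem tsum_half_integer_theta_add_one (a : ℤ → ℂ) (τ : ℂ) :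
    ∑' m : ℤ, a m * e (((m : ℂ) + 1 / 2) ^ 2 / 2 * (τ + 1) + ((m : ℂ) + 1 / 2) / 2) =
      e (1 / 8) *
        ∑' m : ℤ, a m * e (((m : ℂ) + 1 / 2) ^ 2 / 2 * τ + ((m : ℂ) + 1 / 2) / 2) := by
  rw [← tsum_mul_left]
  refine tsum_congr fun m => ?_
  rw [mul_add_one, add_right_comm, e_add, e_half_integer_sq_div_two]
  ring

theorem eta3_add_one (τ : ℂ) : eta3 (τ + 1) = e (1 / 8) * eta3 τ := by
  rw [eta3, tsum_half_integer_theta_add_one, eta3]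
  ring

theorem E2_add_one (τ : ℂ) : E2 (τ + 1) = E2 τ := by
  have hterm (n : ℕ) : e ((n + 1 : ℂ) * (τ + 1)) = e ((n + 1 : ℂ) * τ) := by
    simpa [mul_add_one] using e_add_intCast ((n + 1 : ℂ) * τ) (n + 1)
  simp only [E2, hterm]

theorem e_neg_sq_mul_add_one (x τ : ℂ) :
    e (-x ^ 2 * (τ + 1) / 2) = e (-x ^ 2 / 2) * e (-x ^ 2 * τ / 2) := by
  rw [← e_add]
  ring_nf

theorem gplus_add_one (τ : ℂ) (x : ℝ) :
    gplus (τ + 1) x = e (-(x : ℂ) ^ 2 / 2) * gplus τ x := by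
  simp only [gplus, ← ite_zero_mul]
  rw [tsum_half_integer_theta_add_one, eta3_add_one, e_neg_sq_mul_add_one]
  generalize (∑' _ : ℤ, (_ : ℂ)) = S
  have h_ne : e (1 / 8) ≠ 0 := e_ne_zero _
  field_simp

theorem gstar_add_one (τ : ℂ) (x : ℝ) :
    gstar (τ + 1) x = e (-(x : ℂ) ^ 2 / 2) * gstar τ x := by
  have him : (τ + 1).im = τ.im := by simp
  rw [gstar, him, e_neg_sq_mul_add_one, gstar]
  ring

theorem gfun_add_one (τ : ℂ) (x : ℝ) : gfun (τ + 1) x = e (-(x : ℂ) ^ 2 / 2) * gfun τ x := by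
  rw [gfun, gplus_add_one, gstar_add_one, ← mul_sub, gfun]

theorem tsum_gfun_coset_add_one {N : ℕ} {h : ℝ}
    (hNh : ∃ k : ℤ, (N : ℝ) ^ 2 / 2 + N * h = k) (τ : ℂ) :
    ∑' n : ℤ, gfun (τ + 1) ((N : ℝ) * n + h) =
      e (-(h : ℂ) ^ 2 / 2) * ∑' n : ℤ, gfun τ ((N : ℝ) * n + h) := by
  have hNh' : ∃ k : ℤ, ((N : ℤ) : ℂ) ^ 2 / 2 + (N : ℤ) * (h : ℂ) = k :=
    hNh.imp fun k hk => by simpa using congrArg Complex.ofReal hk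
  rw [← tsum_mul_left]
  refine tsum_congr fun n => ?_
  rw [gfun_add_one, ← e_neg_sq_div_two_coset hNh' n]
  push_cast
  rfl

theorem mul_E2_div_eta3_add_one (m : ℤ) (a b τ : ℂ) :
    a * E2 (τ + 1) / (b * eta3 (τ + 1)) =
      e (-((m : ℂ) + 1 / 2) ^ 2 / 2) * (a * E2 τ / (b * eta3 τ)) := by
  rw [E2_add_one, eta3_add_one, neg_div, e_neg, e_half_integer_sq_div_two]
  have h_ne : e (1 / 8) ≠ 0 := e_ne_zero _
  field_simp

theorem sq_div_two_add_mul_eq_intCast_of_even {N : ℕ} (hN : N ≠ 0) (hNe : Even N) {h : ℝ}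
    (hh : ∃ k : ℤ, h = (k : ℝ) / N) : ∃ k : ℤ, (N : ℝ) ^ 2 / 2 + N * h = k := by
  obtain ⟨k, hk⟩ := hh
  obtain ⟨M, hM⟩ := hNe
  have hNk : (N : ℝ) * h = k := by rw [hk, mul_div_cancel₀ _ (Nat.cast_ne_zero.mpr hN)]
  have hNM : (N : ℝ) = M + M := by exact_mod_cast hM
  refine ⟨N * M + k, ?_⟩
  push_cast
  linear_combination hNk + (N : ℝ) / 2 * hNM

/-- The hypothesis on `h` says `h ∈ (1/N)ℤ` for even `N` and `h ∈ (1/N)(ℤ + 1/2)` for odd `N`. -/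
theorem tvtheta_translation_general (N : ℕ+) (h : ℝ)
    (hNh : ∃ k : ℤ, (N : ℝ) ^ 2 / 2 + N * h = k) (τ : UpperHalfPlane) :
    tvtheta N h (τ + 1) = e (-(h : ℂ) ^ 2 / 2) * tvtheta N h τ := by
  rw [tvtheta, tsum_gfun_coset_add_one hNh, tvtheta, mul_add]
  congr 1
  split_ifs with h_half
  · obtain ⟨m, rfl⟩ := h_half
    simpa using mul_E2_div_eta3_add_one m _ _ τ
  · rw [mul_zero]

/-- `ϑ̃_{N,h}(τ+1) = e(-h²/2)·ϑ̃_{N,h}(τ)`. -/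
theorem tvtheta_translation (N : ℕ) (hN : 0 < N) (hNe : Even N) (h : ℝ)
    (hh : ∃ k : ℤ, h = (k : ℝ) / N) (τ : ℂ) (hτ : 0 < τ.im) :
    tvtheta N h (τ + 1) = e (-(h : ℂ)^2 / 2) * tvtheta N h τ := by
  exact tvtheta_translation_general ⟨N, hN⟩ h
    (sq_div_two_add_mul_eq_intCast_of_even hN.ne' hNe hh) ⟨τ, hτ⟩
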